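/- arXiv:1804.10263 — 2 statements merged into one kernel-verified Lean document; each statement's English description precedes it below -/
import Mathlib

section
/- Let (X, 𝓑, 𝐛) be a coarse proximity space, φ the induced relation (A φ B iff every unbounded B' ⊆ B satisfies A 𝐛 B' and every unbounded A' ⊆ A satisfies A' 𝐛 B), and A, B ⊆ X. Then the following are equivalent: (1) for all C ⊆ X, A ≪ C if and only if B ≪ C; (2) A φ B. -/
/-!
Taking complements, `A` and `B` have the same coarse neighborhoods iff they are close to the same
sets `D`. If so, an unbounded subset of `B` is close to `B`, hence to `A`, and symmetrically.
Conversely, if `A φ B` and `A` is not close to `D`, the strong axiom gives `E` not close to `A` with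
`Eᶜ` not close to `D`. Then `B ∩ E` must be bounded, because otherwise it would be close to `A`;
so neither `B ∩ E` nor `B ∩ Eᶜ` is close to `D`, and hence `B` is not.
-/


/-- A coarse proximity space: a set `X` with a bornology `bdd` and a relation `rel`
on subsets of `X` satisfying the axioms of a coarse proximity. Here `X \ E` is `Eᶜ`. -/
structure CoarseProx (X : Type*) where
  bdd : Set (Set X)
  singleton_bdd : ∀ x : X, {x} ∈ bdd
  subset_bdd : ∀ ⦃A B : Set X⦄, A ∈ bdd → B ⊆ A → B ∈ bdd
  union_bdd : ∀ ⦃A B : Set X⦄, A ∈ bdd → B ∈ bdd → A ∪ B ∈ bdd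
  rel : Set X → Set X → Prop
  symm : ∀ ⦃A B : Set X⦄, rel A B → rel B A
  union_iff : ∀ A B C : Set X, rel (A ∪ B) C ↔ rel A C ∨ rel B C
  unbounded_of_rel : ∀ ⦃A B : Set X⦄, rel A B → A ∉ bdd ∧ B ∉ bdd
  strong : ∀ ⦃A B : Set X⦄, ¬ rel A B → ∃ E : Set X, ¬ rel A E ∧ ¬ rel Eᶜ B
  rel_of_inter : ∀ ⦃A B : Set X⦄, A ∩ B ∉ bdd → rel A B

/-- `B` is a coarse neighborhood of `A`, written `A ≪ B`. -/
def CoarseProx.nbhd {X : Type*} (P : CoarseProx X) (A B : Set X) : Prop :=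
  ¬ P.rel A Bᶜ


/-- The weak asymptotic resemblance induced by a coarse proximity. -/
def CoarseProx.phi {X : Type*} (P : CoarseProx X) (A B : Set X) : Prop :=
  (∀ Bp ⊆ B, Bp ∉ P.bdd → P.rel A Bp) ∧ (∀ Ap ⊆ A, Ap ∉ P.bdd → P.rel Ap B)

theorem CoarseProx.rel_mono_left {X : Type*} (P : CoarseProx X) {A A' D : Set X}
    (h : A ⊆ A') (hr : P.rel A D) : P.rel A' D := by
  rw [← Set.union_eq_self_of_subset_left h]
  exact (P.union_iff _ _ _).2 (Or.inl hr)

theorem CoarseProx.rel_of_subset {X : Type*} (P : CoarseProx X) {A A' : Set X}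
    (h : A' ⊆ A) (hu : A' ∉ P.bdd) : P.rel A A' :=
  P.rel_of_inter (by rwa [Set.inter_eq_self_of_subset_right h])

/-- Only one half of `A φ B` is needed to transfer closeness from `B` to `A`. -/
theorem CoarseProx.rel_transfer {X : Type*} (P : CoarseProx X) {A B D : Set X}
    (h : ∀ Bp ⊆ B, Bp ∉ P.bdd → P.rel A Bp) (hB : P.rel B D) : P.rel A D := by
  by_contra hA
  obtain ⟨E, hAE, hED⟩ := P.strong hA
  rw [← Set.inter_union_compl B E, P.union_iff] at hB
  rcases hB with hB | hB
  · have hAB := h (B ∩ E) Set.inter_subset_left (P.unbounded_of_rel hB).1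
    exact hAE (P.symm (P.rel_mono_left Set.inter_subset_right (P.symm hAB)))
  · exact hED (P.rel_mono_left Set.inter_subset_right hB)

/-- two sets are φ related iff they share all coarse neighborhoods. -/
theorem phi_iff_same_coarse_nbhds {X : Type*} (P : CoarseProx X) (A B : Set X) :
    (∀ C : Set X, P.nbhd A C ↔ P.nbhd B C) ↔ P.phi A B := by
  constructor
  · intro h
    have key : ∀ D, P.rel A D ↔ P.rel B D := fun D => by
      simpa [CoarseProx.nbhd, not_iff_not] using h Dᶜ
    exact ⟨fun Bp hs hu => (key Bp).2 (P.rel_of_subset hs hu),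
      fun Ap hs hu => P.symm ((key Ap).1 (P.rel_of_subset hs hu))⟩
  · rintro ⟨h₁, h₂⟩ C
    exact not_congr ⟨P.rel_transfer fun Ap hs hu => P.symm (h₂ Ap hs hu), P.rel_transfer h₁⟩
end

section
/- Let (X,d) be a metric space, x₀ ∈ X, B ⊆ X, and D ⊆ X a coarse neighborhood of B (B ≪ D) with respect to the metric coarse proximity. Then there exists an adequate sequence f such that B ≪ U_{x₀}(B,f) and U_{x₀}(B,f) ≪ D. In other words, the sets U_{x₀}(B,f) over adequate sequences f form a coarse neighborhood base at B. -/
/-!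
Far apart sets are those whose distance outside large balls about `x₀` tends to infinity
(`not_cClose_iff`). Let `h r` be a radius beyond which `B` and `Dᶜ` are `r` apart, and let `f` be
adequate with `f n ≥ h (2 n) + n` (`exists_adequate_ge`). A point beyond radius `f n` and outside
`U = U_{x₀}(B, f)` is at distance at least `n` from `B`, so `B ≪ U`.
For `U ≪ D`, a point `u ∈ U` beyond radius `f N` lies, for some `n ≥ N`, beyond radius `f n` and
within `n` of some `b ∈ B`. If `c ∉ D` were within `N ≤ n` of `u`, then `b` and `c` would be closer
than `2 n`, while both lie beyond radius `f n - n ≥ h (2 n)`, a contradiction.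
-/

open Metric Bornology
open scoped ENNReal

/-- `d(S,T) = inf {d(x,y) : x ∈ S, y ∈ T}`, with `inf ∅ = ∞`. -/
noncomputable def eSetDist {X : Type*} [MetricSpace X] (S T : Set X) : ℝ≥0∞ :=
  ⨅ x ∈ S, ⨅ y ∈ T, edist x y

/-- `A 𝐛 B`: there is `ε < ∞` such that for every metrically bounded `D`,
`d(A ∖ D, B ∖ D) < ε`. -/
def CClose {X : Type*} [MetricSpace X] (A B : Set X) : Prop :=
  ∃ ε : ℝ≥0∞, ε < ⊤ ∧ ∀ D : Set X, IsBounded D → eSetDist (A \ D) (B \ D) < ε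

/-- A sequence `f : ℕ → ℝ` is adequate if it is positive and `f n - f (n-1) > n + 1`
for all `n > 1`. -/
def Adequate (f : ℕ → ℝ) : Prop :=
  (∀ n : ℕ, 0 < f n) ∧ ∀ n : ℕ, 1 < n → (n : ℝ) + 1 < f n - f (n - 1)

/-- The coarse neighborhood of `A` of radius `f` relative to `x₀`:
`U_{x₀}(A, f) = A ∪ ⋃_{n ≥ 1} (𝓑(A, n) ∖ 𝓑(x₀, f n))`, where `𝓑(A, n)` is the open
`n`-neighborhood of `A`. -/
def nbhdU {X : Type*} [MetricSpace X] (x₀ : X) (A : Set X) (f : ℕ → ℝ) : Set X :=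
  A ∪ ⋃ n : ℕ, ⋃ _ : 1 ≤ n, ((⋃ a ∈ A, Metric.ball a (n : ℝ)) \ Metric.ball x₀ (f n))

/-- Being coarsely far apart means that for every `r` the two sets are at least `r` apart
outside a large enough ball about `x₀`. -/
lemma not_cClose_iff {X : Type*} [MetricSpace X] (x₀ : X) (A B : Set X) :
    ¬ CClose A B ↔ ∀ r : ℕ, ∃ R : ℝ, ∀ a ∈ A, ∀ b ∈ B,
      R ≤ dist a x₀ → R ≤ dist b x₀ → (r : ℝ) ≤ dist a b := by
  constructor
  · intro h r
    simp only [CClose] at h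
    push Not at h
    obtain ⟨D, hD, hr⟩ := h (r : ℝ≥0∞) (ENNReal.natCast_lt_top r)
    obtain ⟨R, hR⟩ := hD.subset_ball x₀
    refine ⟨R, fun a ha b hb haR hbR => ?_⟩
    have ha' : a ∈ A \ D := ⟨ha, fun h => absurd (mem_ball.1 (hR h)) haR.not_gt⟩
    have hb' : b ∈ B \ D := ⟨hb, fun h => absurd (mem_ball.1 (hR h)) hbR.not_gt⟩
    have h1 : (r : ℝ≥0∞) ≤ edist a b :=
      hr.trans ((iInf₂_le a ha').trans (iInf₂_le b hb'))
    rw [edist_dist, ← ENNReal.ofReal_natCast] at h1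
    exact (ENNReal.ofReal_le_ofReal_iff dist_nonneg).1 h1
  · rintro h ⟨ε, hε, hc⟩
    obtain ⟨r, hr⟩ := ENNReal.exists_nat_gt hε.ne
    obtain ⟨R, hR⟩ := h r
    refine absurd (hc (ball x₀ R) isBounded_ball) (not_lt.2 (hr.le.trans ?_))
    refine le_iInf₂ fun a ha => le_iInf₂ fun b hb => ?_
    rw [edist_dist, ← ENNReal.ofReal_natCast]
    exact ENNReal.ofReal_le_ofReal
      (hR a ha.1 b hb.1 (not_lt.1 fun h => ha.2 h) (not_lt.1 fun h => hb.2 h))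

lemma exists_adequate_ge (g : ℕ → ℝ) : ∃ f, Adequate f ∧ ∀ n, g n ≤ f n := by
  have hpos : ∀ k : ℕ, 0 < |g k| + k + 2 := fun k => by positivity
  refine ⟨fun n => ∑ k ∈ Finset.range (n + 1), (|g k| + k + 2), ⟨fun n => ?_, fun n hn => ?_⟩,
    fun n => ?_⟩
  · exact Finset.sum_pos (fun k _ => hpos k) (by simp)
  · obtain ⟨m, rfl⟩ : ∃ m, n = m + 1 := ⟨n - 1, by omega⟩
    simp only [Nat.add_sub_cancel]
    rw [Finset.sum_range_succ _ (m + 1)]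
    have := abs_nonneg (g (m + 1))
    linarith
  · refine le_trans ?_ (Finset.single_le_sum (fun k _ => (hpos k).le) (Finset.self_mem_range_succ n))
    have := le_abs_self (g n)
    have : (0 : ℝ) ≤ n := n.cast_nonneg
    linarith

/-- the sets `U x₀ B f` form a coarse neighborhood base at `B`. -/
theorem nbhdU_coarse_neighborhood_base {X : Type*} [MetricSpace X] (x₀ : X)
    (B D : Set X) (hBD : ¬ CClose B Dᶜ) :
    ∃ f : ℕ → ℝ, Adequate f ∧
      ¬ CClose B (nbhdU x₀ B f)ᶜ ∧ ¬ CClose (nbhdU x₀ B f) Dᶜ := by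
  choose h hh using (not_cClose_iff x₀ B Dᶜ).1 hBD
  obtain ⟨f, hf, hfh⟩ := exists_adequate_ge fun n => h (2 * n) + n
  refine ⟨f, hf, (not_cClose_iff x₀ _ _).2 fun n => ?_, (not_cClose_iff x₀ _ _).2 fun r => ?_⟩
  · rcases Nat.eq_zero_or_pos n with rfl | hn
    · exact ⟨0, fun a _ b _ _ _ => by simp⟩
    refine ⟨f n, fun b hb x hx _ hxR => ?_⟩
    by_contra! hlt
    refine hx (Or.inr (Set.mem_iUnion₂.2 ⟨n, hn, Set.mem_iUnion₂.2 ⟨b, hb, ?_⟩, ?_⟩))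
    · rwa [mem_ball, dist_comm]
    · exact fun h => absurd (mem_ball.1 h) hxR.not_gt
  · -- `r + 1` in place of `r` so that points of `B` lie in their own neighborhoods.
    refine ⟨f (r + 1), fun u hu c hc huR hcR => ?_⟩
    by_contra! hlt
    obtain ⟨n, hrn, b, hb, hub, hun⟩ :
        ∃ n, r + 1 ≤ n ∧ ∃ b ∈ B, dist u b < n ∧ f n ≤ dist u x₀ := by
      rcases hu with hu | hu
      · exact ⟨r + 1, le_rfl, u, hu, by rw [dist_self]; positivity, huR⟩
      · obtain ⟨n, -, hn, hnx⟩ := Set.mem_iUnion₂.1 hu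
        obtain ⟨b, hb, hub⟩ := Set.mem_iUnion₂.1 hn
        rw [mem_ball] at hub hnx
        rcases le_total (r + 1) n with hle | hle
        · exact ⟨n, hle, b, hb, hub, not_lt.1 hnx⟩
        · exact ⟨r + 1, le_rfl, b, hb, hub.trans_le (by exact_mod_cast hle), huR⟩
    have hrn' : (r : ℝ) + 1 ≤ n := by exact_mod_cast hrn
    have hfn := hfh n
    have t1 := dist_triangle u b x₀
    have t2 := dist_triangle u c x₀
    have t3 := dist_triangle b u c
    rw [dist_comm b u] at t3
    have key := hh (2 * n) b hb c hc (by linarith) (by linarith)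
    push_cast at key
    linarith
end
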